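/- Let X be an m×n complex matrix. Then the following are equivalent: (1) for every natural number l, every l×m complex matrix L with ‖L‖_c ≤ 1, and every l×n complex matrix R with ‖R‖_c ≤ 1, one has |Tr((Lᴴ R)ᴴ X)| ≤ 1; (2) there exist η ∈ ℂᵐ, ξ ∈ ℂⁿ, and an m×n complex matrix C such that X = Δ_m(η)ᴴ C Δ_n(ξ) and ‖η‖₂ · ‖C‖_∞ · ‖ξ‖₂ ≤ 1. (This expresses that the unit ball for the completely bounded bilinear-form norm is the polar of the unit ball for the Schur multiplier norm with respect to the pairing ⟨X,Y⟩ = Tr(YᴴX).) -/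

import Mathlib

open Matrix BigOperators

/-- The ℓ²→ℓ² operator norm of a complex matrix. -/
noncomputable def opNorm {m n : ℕ} (A : Matrix (Fin m) (Fin n) ℂ) : ℝ :=
  ‖(Matrix.toEuclideanLin A).toContinuousLinearMap‖

/-- The Euclidean norm of a complex vector. -/
noncomputable def eNorm {n : ℕ} (ξ : Fin n → ℂ) : ℝ :=
  Real.sqrt (∑ j, ‖ξ j‖ ^ 2)

/-- The column norm: the maximum Euclidean norm of a column. -/
noncomputable def colNorm {l m : ℕ} (L : Matrix (Fin l) (Fin m) ℂ) : ℝ :=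
  ⨆ j : Fin m, Real.sqrt (∑ i, ‖L i j‖ ^ 2)

/-!
Expanding `Tr((Lᴴ R)ᴴ X)` over the rows of `L` and `R` gives `∑ₖ Lₖ ⬝ X (star Rₖ)`, and a
Cauchy–Schwarz estimate in `k` shows that a factorization `X = Δ(η)ᴴ C Δ(ξ)` gives the trace bound.

For the converse, scaling `L` and `R` turns the trace bound into
`2 Re ∑ₖ aₖ ⬝ X bₖ ≤ maxᵢ ∑ₖ |aₖᵢ|² + maxⱼ ∑ₖ |bₖⱼ|²` for finite families of vectors. This says that
no convex combination of the functions `(i, j) ↦ |aᵢ|² + |bⱼ|² - 2 Re (a ⬝ X b)` is everywhere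
negative, so a separation theorem yields a probability on the index pairs against which each of
them has nonnegative mean. With `p`, `q` the marginals, optimizing over the scale and phase of `a`
gives `|a ⬝ X b|² ≤ (∑ᵢ pᵢ |aᵢ|²) (∑ⱼ qⱼ |bⱼ|²)`, that is, `Δ(√p)⁻¹ X Δ(√q)⁻¹` is a contraction.
-/

section ConvexSeparation

variable {ι : Type*} [Fintype ι] {s : Set (ι → ℝ)}

lemma exists_nonneg_ne_zero_forall_dotProduct_nonneg (hs : Convex ℝ s) (hne : s.Nonempty)
    (h : ∀ z ∈ s, ∃ i, 0 ≤ z i) : ∃ w : ι → ℝ, 0 ≤ w ∧ w ≠ 0 ∧ ∀ z ∈ s, 0 ≤ w ⬝ᵥ z := by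
  classical
  let negative : Set (ι → ℝ) := Set.univ.pi fun _ ↦ Set.Iio 0
  have hdisj : Disjoint negative s := Set.disjoint_left.2 fun z hz hzs ↦
    let ⟨i, hi⟩ := h z hzs
    hi.not_gt (hz i trivial)
  obtain ⟨f, u, hfu, huf⟩ := geometric_hahn_banach_open (convex_pi fun _ _ ↦ convex_Iio 0)
    (isOpen_set_pi Set.finite_univ fun _ _ ↦ isOpen_Iio) hs hdisj
  have hf_le : ∀ x ≤ 0, f x ≤ u := fun x hx ↦ by
    have hcl : x ∈ closure negative := by
      simpa only [negative, closure_pi_set, closure_Iio, Set.mem_univ_pi, Set.mem_Iic,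
        Pi.le_def, Pi.zero_apply] using hx
    exact closure_minimal (fun y hy ↦ (hfu y hy).le) (isClosed_le f.continuous continuous_const) hcl
  have hu : 0 ≤ u := by simpa only [map_zero] using hf_le 0 le_rfl
  obtain ⟨w, hw⟩ := (dotProductEquiv ℝ ι).surjective f.toLinearMap
  have hfw (z : ι → ℝ) : f z = w ⬝ᵥ z := (LinearMap.congr_fun hw z).symm
  refine ⟨w, fun i ↦ ?_, ?_, fun z hz ↦ hfw z ▸ hu.trans (huf z hz)⟩
  · by_contra! hwi
    have := hf_le (Pi.single i ((u + 1) / w i)) (Pi.single_nonpos.2 <|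
      div_nonpos_of_nonneg_of_nonpos (by positivity) hwi.le)
    rw [hfw, dotProduct_single, mul_div_cancel₀ _ hwi.ne] at this
    linarith
  · intro hw
    obtain ⟨z, hz⟩ := hne
    have hneg : f (-1) < u := hfu _ fun _ _ ↦ by simp
    have hpos : u ≤ f z := huf z hz
    simp only [hfw, hw, zero_dotProduct] at hneg hpos
    exact hneg.not_ge hpos

lemma exists_mem_stdSimplex_forall_dotProduct_nonneg (hs : Convex ℝ s) (hne : s.Nonempty)
    (h : ∀ z ∈ s, ∃ i, 0 ≤ z i) : ∃ w ∈ stdSimplex ℝ ι, ∀ z ∈ s, 0 ≤ w ⬝ᵥ z := by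
  obtain ⟨w, hw, hw0, hws⟩ := exists_nonneg_ne_zero_forall_dotProduct_nonneg hs hne h
  have hsum : 0 < ∑ i, w i := Fintype.sum_pos (hw.lt_of_ne' hw0)
  refine ⟨(∑ i, w i)⁻¹ • w, ⟨fun i ↦ mul_nonneg (by positivity) (hw i), ?_⟩, fun z hz ↦ ?_⟩
  · simp only [Pi.smul_apply, smul_eq_mul, ← Finset.mul_sum, inv_mul_cancel₀ hsum.ne']
  · rw [smul_dotProduct]
    exact mul_nonneg (by positivity) (hws z hz)

end ConvexSeparation

section SchurPolar

open scoped Matrix.Norms.L2Operator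

local notation "‖" x "‖₂" => norm (WithLp.toLp 2 x)

variable {𝕜 ι κ τ : Type*} [RCLike 𝕜] [Fintype ι] [Fintype κ] [Fintype τ]

lemma norm_toLp_star (a : ι → 𝕜) : ‖star a‖₂ = ‖a‖₂ := by
  simp only [EuclideanSpace.norm_eq, Pi.star_apply, norm_star]

lemma norm_dotProduct_le (a b : ι → 𝕜) : ‖a ⬝ᵥ b‖ ≤ ‖a‖₂ * ‖b‖₂ := by
  have := norm_inner_le_norm (𝕜 := 𝕜) (WithLp.toLp 2 (star b)) (WithLp.toLp 2 a)
  rwa [EuclideanSpace.inner_toLp_toLp, star_star, norm_toLp_star, mul_comm] at this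

lemma norm_dotProduct_mulVec_le [DecidableEq κ] (C : Matrix ι κ 𝕜) (a : ι → 𝕜) (b : κ → 𝕜) :
    ‖a ⬝ᵥ C *ᵥ b‖ ≤ ‖a‖₂ * (‖C‖ * ‖b‖₂) :=
  (norm_dotProduct_le a _).trans <| by gcongr; exact C.l2_opNorm_mulVec (WithLp.toLp 2 b)

lemma l2_opNorm_le_of_norm_dotProduct_mulVec_le [DecidableEq κ] {C : Matrix ι κ 𝕜} {c : ℝ}
    (hc : 0 ≤ c) (h : ∀ a b, ‖a ⬝ᵥ C *ᵥ b‖ ≤ c * (‖a‖₂ * ‖b‖₂)) : ‖C‖ ≤ c := by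
  rw [l2_opNorm_def]
  refine ContinuousLinearMap.opNorm_le_of_re_inner_le hc fun b a hb ha ↦ ?_
  rw [inner_re_symm]
  refine (RCLike.re_le_norm _).trans ?_
  simpa [EuclideanSpace.inner_eq_star_dotProduct, dotProduct_comm _ (star a.ofLp),
    norm_toLp_star, ha, hb] using h (star a.ofLp) b.ofLp

lemma dotProduct_diagonal_mul_mul_diagonal_mulVec [DecidableEq ι] [DecidableEq κ]
    (η a : ι → 𝕜) (ξ b : κ → 𝕜) (C : Matrix ι κ 𝕜) :
    a ⬝ᵥ (diagonal η * C * diagonal ξ) *ᵥ b = (a * η) ⬝ᵥ C *ᵥ (ξ * b) := by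
  have hξ : diagonal ξ *ᵥ b = ξ * b := funext <| mulVec_diagonal ξ b
  have hη : a ᵥ* diagonal η = a * η := funext <| vecMul_diagonal a η
  rw [← mulVec_mulVec, ← mulVec_mulVec, hξ, dotProduct_mulVec, hη]

/-- `X` lies in the polar of the unit ball for the Schur multiplier norm, with respect to the
pairing `⟨X, Y⟩ = Tr(Yᴴ X)`. That unit ball consists of the products `Lᴴ R` in which `L` and `R`
have columns of Euclidean norm at most one. -/
def MemSchurPolar (X : Matrix ι κ 𝕜) : Prop :=
  ∀ (l : ℕ) (L : Matrix (Fin l) ι 𝕜) (R : Matrix (Fin l) κ 𝕜),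
    (∀ i, ‖L.col i‖₂ ≤ 1) → (∀ j, ‖R.col j‖₂ ≤ 1) → ‖((Lᴴ * R)ᴴ * X).trace‖ ≤ 1

lemma trace_conjTranspose_conjTranspose_mul_mul (L : Matrix τ ι 𝕜) (R : Matrix τ κ 𝕜)
    (X : Matrix ι κ 𝕜) :
    ((Lᴴ * R)ᴴ * X).trace = ∑ k, L k ⬝ᵥ X *ᵥ star (R k) := by
  rw [conjTranspose_mul, conjTranspose_conjTranspose, Matrix.mul_assoc, trace_mul_comm,
    Matrix.mul_assoc]
  rfl

lemma sqrt_sum_norm_row_mul_sq_le {L : Matrix τ ι 𝕜} (hL : ∀ i, ‖L.col i‖₂ ≤ 1) (η : ι → 𝕜) :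
    √(∑ k, ‖L k * η‖₂ ^ 2) ≤ ‖η‖₂ := by
  refine Real.sqrt_le_iff.2 ⟨norm_nonneg _, ?_⟩
  calc
    ∑ k, ‖L k * η‖₂ ^ 2 = ∑ i, ‖L.col i‖₂ ^ 2 * ‖η i‖ ^ 2 := by
      simp only [EuclideanSpace.norm_sq_eq, Pi.mul_apply, norm_mul, mul_pow, col_apply,
        Finset.sum_mul]
      exact Finset.sum_comm
    _ ≤ ∑ i, ‖η i‖ ^ 2 := Finset.sum_le_sum fun i _ ↦
      mul_le_of_le_one_left (by positivity) (pow_le_one₀ (norm_nonneg _) (hL i))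
    _ = ‖η‖₂ ^ 2 := (EuclideanSpace.norm_sq_eq _).symm

lemma norm_trace_mul_diagonal_mul_mul_diagonal_le [DecidableEq ι] [DecidableEq κ]
    {L : Matrix τ ι 𝕜} {R : Matrix τ κ 𝕜} (hL : ∀ i, ‖L.col i‖₂ ≤ 1) (hR : ∀ j, ‖R.col j‖₂ ≤ 1)
    (η : ι → 𝕜) (ξ : κ → 𝕜) (C : Matrix ι κ 𝕜) :
    ‖((Lᴴ * R)ᴴ * ((diagonal η)ᴴ * C * diagonal ξ)).trace‖ ≤ ‖η‖₂ * ‖C‖ * ‖ξ‖₂ := by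
  have hstar (k : τ) : ‖ξ * star (R k)‖₂ = ‖R k * star ξ‖₂ := by
    rw [← norm_toLp_star, star_mul, star_star]
  calc
    ‖((Lᴴ * R)ᴴ * ((diagonal η)ᴴ * C * diagonal ξ)).trace‖
        = ‖∑ k, (L k * star η) ⬝ᵥ C *ᵥ (ξ * star (R k))‖ := by
      simp only [trace_conjTranspose_conjTranspose_mul_mul, diagonal_conjTranspose,
        dotProduct_diagonal_mul_mul_diagonal_mulVec]
    _ ≤ ∑ k, ‖L k * star η‖₂ * (‖C‖ * ‖R k * star ξ‖₂) :=
      norm_sum_le_of_le _ fun k _ ↦ hstar k ▸ norm_dotProduct_mulVec_le C _ _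
    _ = (∑ k, ‖L k * star η‖₂ * ‖R k * star ξ‖₂) * ‖C‖ := by
      rw [Finset.sum_mul]
      exact Finset.sum_congr rfl fun k _ ↦ by ring
    _ ≤ √(∑ k, ‖L k * star η‖₂ ^ 2) * √(∑ k, ‖R k * star ξ‖₂ ^ 2) * ‖C‖ :=
      mul_le_mul_of_nonneg_right (Real.sum_mul_le_sqrt_mul_sqrt _ _ _) (norm_nonneg C)
    _ ≤ ‖star η‖₂ * ‖star ξ‖₂ * ‖C‖ := by
      grw [sqrt_sum_norm_row_mul_sq_le hL, sqrt_sum_norm_row_mul_sq_le hR]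
    _ = ‖η‖₂ * ‖C‖ * ‖ξ‖₂ := by
      rw [norm_toLp_star, norm_toLp_star]
      ring

lemma exists_eq_smul_forall_norm_col_le_one {α : Type*} {L : Matrix τ α 𝕜} {s : ℝ}
    (hs : 0 ≤ s) (hL : ∀ i, ‖L.col i‖₂ ≤ s) :
    ∃ L₁ : Matrix τ α 𝕜, L = (s : 𝕜) • L₁ ∧ ∀ i, ‖L₁.col i‖₂ ≤ 1 := by
  refine ⟨(s : 𝕜)⁻¹ • L, ?_, fun i ↦ ?_⟩
  · rcases eq_or_ne s 0 with rfl | hs0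
    · ext k i
      have hcol : L.col i = 0 := by simpa using hL i
      simpa using congrFun hcol k
    · rw [smul_inv_smul₀ (RCLike.ofReal_ne_zero.2 hs0)]
  · have hcol : ‖((s : 𝕜)⁻¹ • L).col i‖₂ = s⁻¹ * ‖L.col i‖₂ := by
      change ‖(s : 𝕜)⁻¹ • L.col i‖₂ = _
      rw [WithLp.toLp_smul, norm_smul, norm_inv, RCLike.norm_of_nonneg hs]
    rw [hcol]
    exact inv_mul_le_one_of_le₀ (hL i) hs

namespace MemSchurPolar

variable {X : Matrix ι κ 𝕜}

lemma norm_trace_le_mul {l : ℕ} {L : Matrix (Fin l) ι 𝕜} {R : Matrix (Fin l) κ 𝕜} {s t : ℝ}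
    (hX : MemSchurPolar X) (hs : 0 ≤ s) (ht : 0 ≤ t) (hL : ∀ i, ‖L.col i‖₂ ≤ s)
    (hR : ∀ j, ‖R.col j‖₂ ≤ t) : ‖((Lᴴ * R)ᴴ * X).trace‖ ≤ s * t := by
  obtain ⟨L₁, rfl, hL₁⟩ := exists_eq_smul_forall_norm_col_le_one hs hL
  obtain ⟨R₁, rfl, hR₁⟩ := exists_eq_smul_forall_norm_col_le_one ht hR
  have hscale : ‖((((s : 𝕜) • L₁)ᴴ * ((t : 𝕜) • R₁))ᴴ * X).trace‖ =
      s * t * ‖((L₁ᴴ * R₁)ᴴ * X).trace‖ := by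
    simp only [conjTranspose_smul, conjTranspose_mul, conjTranspose_conjTranspose, smul_mul,
      Matrix.mul_smul, trace_smul, smul_eq_mul, norm_mul, norm_star, RCLike.norm_of_nonneg hs,
      RCLike.norm_of_nonneg ht]
    ring
  rw [hscale]
  exact mul_le_of_le_one_right (by positivity) (hX l L₁ R₁ hL₁ hR₁)

lemma norm_sum_dotProduct_mulVec_le (hX : MemSchurPolar X) {a : τ → ι → 𝕜} {b : τ → κ → 𝕜}
    {s t : ℝ} (ha : ∀ i, ∑ k, ‖a k i‖ ^ 2 ≤ s) (hb : ∀ j, ∑ k, ‖b k j‖ ^ 2 ≤ t) :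
    ‖∑ k, a k ⬝ᵥ X *ᵥ b k‖ ≤ √s * √t := by
  let e := Fintype.equivFin τ
  let L : Matrix (Fin (Fintype.card τ)) ι 𝕜 := fun k ↦ a (e.symm k)
  let R : Matrix (Fin (Fintype.card τ)) κ 𝕜 := fun k ↦ star (b (e.symm k))
  have htrace : ((Lᴴ * R)ᴴ * X).trace = ∑ k, a k ⬝ᵥ X *ᵥ b k := by
    rw [trace_conjTranspose_conjTranspose_mul_mul, ← e.symm.sum_comp]
    simp only [L, R, star_star]
  have hL (i : ι) : ‖L.col i‖₂ ≤ √s := by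
    rw [EuclideanSpace.norm_eq]
    exact Real.sqrt_le_sqrt <| (e.symm.sum_comp fun k ↦ ‖a k i‖ ^ 2).trans_le (ha i)
  have hR (j : κ) : ‖R.col j‖₂ ≤ √t := by
    rw [EuclideanSpace.norm_eq]
    have hentry (k) : ‖R.col j k‖ = ‖b (e.symm k) j‖ := norm_star _
    simp only [hentry]
    exact Real.sqrt_le_sqrt <| (e.symm.sum_comp fun k ↦ ‖b k j‖ ^ 2).trans_le (hb j)
  exact htrace ▸ hX.norm_trace_le_mul (Real.sqrt_nonneg s) (Real.sqrt_nonneg t) hL hR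

lemma exists_two_mul_re_sum_le [Nonempty ι] [Nonempty κ] (hX : MemSchurPolar X)
    (a : τ → ι → 𝕜) (b : τ → κ → 𝕜) :
    ∃ i j, 2 * RCLike.re (∑ k, a k ⬝ᵥ X *ᵥ b k) ≤ ∑ k, ‖a k i‖ ^ 2 + ∑ k, ‖b k j‖ ^ 2 := by
  obtain ⟨i, hi⟩ := Finite.exists_max fun i ↦ ∑ k, ‖a k i‖ ^ 2
  obtain ⟨j, hj⟩ := Finite.exists_max fun j ↦ ∑ k, ‖b k j‖ ^ 2
  refine ⟨i, j, ?_⟩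
  calc
    2 * RCLike.re (∑ k, a k ⬝ᵥ X *ᵥ b k)
        ≤ 2 * (√(∑ k, ‖a k i‖ ^ 2) * √(∑ k, ‖b k j‖ ^ 2)) := by
      gcongr
      exact (RCLike.re_le_norm _).trans (hX.norm_sum_dotProduct_mulVec_le hi hj)
    _ ≤ √(∑ k, ‖a k i‖ ^ 2) ^ 2 + √(∑ k, ‖b k j‖ ^ 2) ^ 2 := by
      rw [← mul_assoc]
      exact two_mul_le_add_sq _ _
    _ = ∑ k, ‖a k i‖ ^ 2 + ∑ k, ‖b k j‖ ^ 2 := by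
      rw [Real.sq_sqrt (by positivity), Real.sq_sqrt (by positivity)]

end MemSchurPolar

/-- The defect of the inequality `2 Re (a ⬝ X b) ≤ |aᵢ|² + |bⱼ|²`, as a function of `(i, j)`. -/
def amgmDefect (X : Matrix ι κ 𝕜) (a : ι → 𝕜) (b : κ → 𝕜) (ij : ι × κ) : ℝ :=
  ‖a ij.1‖ ^ 2 + ‖b ij.2‖ ^ 2 - 2 * RCLike.re (a ⬝ᵥ X *ᵥ b)

lemma smul_amgmDefect {c : ℝ} (hc : 0 ≤ c) (X : Matrix ι κ 𝕜) (a : ι → 𝕜) (b : κ → 𝕜) :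
    c • amgmDefect X a b = amgmDefect X ((√c : 𝕜) • a) ((√c : 𝕜) • b) := by
  ext ij
  have hsq : (√c : 𝕜) * √c = c := by exact_mod_cast Real.mul_self_sqrt hc
  simp only [amgmDefect, Pi.smul_apply, smul_eq_mul, norm_mul, mul_pow, RCLike.norm_ofReal, sq_abs,
    Real.sq_sqrt hc, mulVec_smul, dotProduct_smul, smul_dotProduct, ← mul_assoc, hsq,
    RCLike.re_ofReal_mul]
  ring

lemma dotProduct_amgmDefect {w : ι × κ → ℝ} (hw : ∑ ij, w ij = 1) (X : Matrix ι κ 𝕜)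
    (a : ι → 𝕜) (b : κ → 𝕜) :
    w ⬝ᵥ amgmDefect X a b = ∑ i, (∑ j, w (i, j)) * ‖a i‖ ^ 2 + ∑ j, (∑ i, w (i, j)) * ‖b j‖ ^ 2 -
      2 * RCLike.re (a ⬝ᵥ X *ᵥ b) := by
  simp only [dotProduct, amgmDefect, mul_sub, mul_add, Finset.sum_sub_distrib,
    Finset.sum_add_distrib, ← Finset.sum_mul, hw, one_mul]
  rw [Fintype.sum_prod_type, Fintype.sum_prod_type_right]
  simp only [Finset.sum_mul]

namespace MemSchurPolar

variable {X : Matrix ι κ 𝕜} [Nonempty ι] [Nonempty κ]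

lemma exists_nonneg_of_mem_convexHull (hX : MemSchurPolar X) {z : ι × κ → ℝ}
    (hz : z ∈ convexHull ℝ (Set.range (amgmDefect X).uncurry)) : ∃ ij, 0 ≤ z ij := by
  obtain ⟨τ, _, c, y, hc, -, hy, rfl⟩ := mem_convexHull_iff_exists_fintype.1 hz
  choose ab hab using hy
  obtain ⟨i, j, hij⟩ := hX.exists_two_mul_re_sum_le (fun k ↦ (√(c k) : 𝕜) • (ab k).1)
    (fun k ↦ (√(c k) : 𝕜) • (ab k).2)
  refine ⟨(i, j), ?_⟩
  have hterm (k : τ) : c k • y k =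
      amgmDefect X ((√(c k) : 𝕜) • (ab k).1) ((√(c k) : 𝕜) • (ab k).2) := by
    rw [← smul_amgmDefect (hc k), ← hab k, Function.uncurry_def]
  simp only [hterm, Finset.sum_apply, amgmDefect, Finset.sum_sub_distrib, Finset.sum_add_distrib,
    ← Finset.mul_sum, ← map_sum]
  exact sub_nonneg.2 hij

lemma exists_mem_stdSimplex_two_mul_re_le (hX : MemSchurPolar X) :
    ∃ p ∈ stdSimplex ℝ ι, ∃ q ∈ stdSimplex ℝ κ, ∀ a b,
      2 * RCLike.re (a ⬝ᵥ X *ᵥ b) ≤ ∑ i, p i * ‖a i‖ ^ 2 + ∑ j, q j * ‖b j‖ ^ 2 := by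
  obtain ⟨w, ⟨hw0, hw1⟩, hw⟩ := exists_mem_stdSimplex_forall_dotProduct_nonneg
    (convex_convexHull ℝ _) (Set.range_nonempty (amgmDefect X).uncurry).convexHull
    fun _ ↦ hX.exists_nonneg_of_mem_convexHull
  refine ⟨fun i ↦ ∑ j, w (i, j), ⟨fun i ↦ Finset.sum_nonneg fun j _ ↦ hw0 (i, j), ?_⟩,
    fun j ↦ ∑ i, w (i, j), ⟨fun j ↦ Finset.sum_nonneg fun i _ ↦ hw0 (i, j), ?_⟩, fun a b ↦ ?_⟩
  · rw [← Fintype.sum_prod_type, hw1]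
  · rw [← Fintype.sum_prod_type_right, hw1]
  · have := hw _ (subset_convexHull ℝ _ ⟨(a, b), rfl⟩)
    rwa [Function.uncurry_apply_pair, dotProduct_amgmDefect hw1, sub_nonneg] at this

end MemSchurPolar

lemma norm_dotProduct_mulVec_sq_le_of_two_mul_re_le {X : Matrix ι κ 𝕜} {p : ι → ℝ} {q : κ → ℝ}
    (h : ∀ a b, 2 * RCLike.re (a ⬝ᵥ X *ᵥ b) ≤ ∑ i, p i * ‖a i‖ ^ 2 + ∑ j, q j * ‖b j‖ ^ 2)
    (a : ι → 𝕜) (b : κ → 𝕜) :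
    ‖a ⬝ᵥ X *ᵥ b‖ ^ 2 ≤ (∑ i, p i * ‖a i‖ ^ 2) * ∑ j, q j * ‖b j‖ ^ 2 := by
  obtain ⟨c, hc, hcX⟩ := RCLike.exists_norm_eq_mul_self (a ⬝ᵥ X *ᵥ b)
  have hquad (t : ℝ) : 0 ≤ (∑ i, p i * ‖a i‖ ^ 2) * (t * t) + -(2 * ‖a ⬝ᵥ X *ᵥ b‖) * t +
      ∑ j, q j * ‖b j‖ ^ 2 := by
    have hre : RCLike.re (((t * c : 𝕜) • a) ⬝ᵥ X *ᵥ b) = t * ‖a ⬝ᵥ X *ᵥ b‖ := by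
      rw [smul_dotProduct, smul_eq_mul, mul_assoc, ← hcX, RCLike.re_ofReal_mul, RCLike.ofReal_re]
    have hsum : ∑ i, p i * ‖((t * c : 𝕜) • a) i‖ ^ 2 = (∑ i, p i * ‖a i‖ ^ 2) * (t * t) := by
      simp only [Pi.smul_apply, smul_eq_mul, norm_mul, RCLike.norm_ofReal, hc, mul_one, mul_pow,
        sq_abs, Finset.sum_mul]
      exact Finset.sum_congr rfl fun i _ ↦ by ring
    linarith [hre ▸ hsum ▸ h ((t * c : 𝕜) • a) b]
  have hdiscrim := discrim_le_zero hquad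
  rw [discrim] at hdiscrim
  linarith

lemma norm_sq_sqrt_mul {p : ι → ℝ} (hp : ∀ i, 0 ≤ p i) (a : ι → 𝕜) :
    ‖(fun i ↦ (√(p i) : 𝕜)) * a‖₂ ^ 2 = ∑ i, p i * ‖a i‖ ^ 2 := by
  simp only [EuclideanSpace.norm_sq_eq, Pi.mul_apply, norm_mul, mul_pow, RCLike.norm_ofReal,
    sq_abs, Real.sq_sqrt (hp _)]

lemma norm_sqrt_of_mem_stdSimplex {p : ι → ℝ} (hp : p ∈ stdSimplex ℝ ι) :
    ‖fun i ↦ (√(p i) : 𝕜)‖₂ = 1 := by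
  refine (pow_eq_one_iff_of_nonneg (norm_nonneg _) two_ne_zero).1 ?_
  simpa [hp.2] using norm_sq_sqrt_mul (𝕜 := 𝕜) hp.1 1

lemma norm_mul_mul_inv_le (η a : ι → 𝕜) : ‖η * (a * η⁻¹)‖₂ ≤ ‖a‖₂ := by
  simp only [EuclideanSpace.norm_eq]
  gcongr with i
  rw [Pi.mul_apply, Pi.mul_apply, Pi.inv_apply, mul_left_comm, norm_mul, norm_mul, norm_inv]
  exact mul_le_of_le_one_right (norm_nonneg _) mul_inv_le_one

lemma exists_eq_diagonal_mul_mul_diagonal_of_norm_le [DecidableEq ι] [DecidableEq κ]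
    {X : Matrix ι κ 𝕜} {η : ι → 𝕜} {ξ : κ → 𝕜} (h : ∀ a b, ‖a ⬝ᵥ X *ᵥ b‖ ≤ ‖η * a‖₂ * ‖ξ * b‖₂) :
    ∃ C : Matrix ι κ 𝕜, X = diagonal η * C * diagonal ξ ∧ ‖C‖ ≤ 1 := by
  have hentry (i : ι) (j : κ) : ‖X i j‖ ≤ ‖η i‖ * ‖ξ j‖ := by
    simpa [← Pi.single_mul_right] using h (Pi.single i 1) (Pi.single j 1)
  -- The junk value `0⁻¹ = 0` is harmless: by `hentry`, `X i j = 0` wherever `η i` or `ξ j` is zero.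
  refine ⟨diagonal η⁻¹ * X * diagonal ξ⁻¹, ?_, ?_⟩
  · ext i j
    have hη : η i = 0 → X i j = 0 := fun h0 ↦ by simpa [h0] using hentry i j
    have hξ : ξ j = 0 → X i j = 0 := fun h0 ↦ by simpa [h0] using hentry i j
    simp only [mul_diagonal, diagonal_mul, Pi.inv_apply]
    grind
  · refine l2_opNorm_le_of_norm_dotProduct_mulVec_le zero_le_one fun a b ↦ ?_
    rw [dotProduct_diagonal_mul_mul_diagonal_mulVec, one_mul]
    refine (h _ _).trans ?_
    rw [mul_comm ξ⁻¹]
    gcongr <;> exact norm_mul_mul_inv_le _ _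

theorem MemSchurPolar.exists_eq_diagonal_mul_mul_diagonal [DecidableEq ι] [DecidableEq κ]
    {X : Matrix ι κ 𝕜} (hX : MemSchurPolar X) :
    ∃ (η : ι → 𝕜) (ξ : κ → 𝕜) (C : Matrix ι κ 𝕜),
      X = (diagonal η)ᴴ * C * diagonal ξ ∧ ‖η‖₂ * ‖C‖ * ‖ξ‖₂ ≤ 1 := by
  rcases isEmpty_or_nonempty (ι × κ) with hempty | hne
  · exact ⟨0, 0, 0, ext fun i j ↦ hempty.elim (i, j), by simp⟩
  have : Nonempty ι := .map Prod.fst hne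
  have : Nonempty κ := .map Prod.snd hne
  obtain ⟨p, hp, q, hq, h⟩ := hX.exists_mem_stdSimplex_two_mul_re_le
  let η : ι → 𝕜 := fun i ↦ √(p i)
  let ξ : κ → 𝕜 := fun j ↦ √(q j)
  have hbound (a : ι → 𝕜) (b : κ → 𝕜) : ‖a ⬝ᵥ X *ᵥ b‖ ≤ ‖η * a‖₂ * ‖ξ * b‖₂ := by
    refine le_of_sq_le_sq ?_ (by positivity)
    rw [mul_pow, norm_sq_sqrt_mul hp.1, norm_sq_sqrt_mul hq.1]
    exact norm_dotProduct_mulVec_sq_le_of_two_mul_re_le h a b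
  obtain ⟨C, hXC, hC⟩ := exists_eq_diagonal_mul_mul_diagonal_of_norm_le hbound
  have hη : star η = η := funext fun i ↦ RCLike.conj_ofReal _
  refine ⟨η, ξ, C, by rw [diagonal_conjTranspose, hη, hXC], ?_⟩
  rwa [norm_sqrt_of_mem_stdSimplex hp, norm_sqrt_of_mem_stdSimplex hq, one_mul, mul_one]

theorem cb_bilinear_ball_eq_polar_of_schur_ball_general [DecidableEq ι] [DecidableEq κ]
    (X : Matrix ι κ 𝕜) :
    MemSchurPolar X ↔ ∃ (η : ι → 𝕜) (ξ : κ → 𝕜) (C : Matrix ι κ 𝕜),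
      X = (diagonal η)ᴴ * C * diagonal ξ ∧ ‖η‖₂ * ‖C‖ * ‖ξ‖₂ ≤ 1 := by
  refine ⟨fun hX ↦ hX.exists_eq_diagonal_mul_mul_diagonal, ?_⟩
  rintro ⟨η, ξ, C, rfl, h⟩ l L R hL hR
  exact (norm_trace_mul_diagonal_mul_mul_diagonal_le hL hR η ξ C).trans h

lemma opNorm_eq_l2_opNorm {m n : ℕ} (A : Matrix (Fin m) (Fin n) ℂ) : opNorm A = ‖A‖ := rfl

lemma eNorm_eq_norm_toLp {n : ℕ} (ξ : Fin n → ℂ) : eNorm ξ = ‖ξ‖₂ :=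
  (EuclideanSpace.norm_eq _).symm

lemma colNorm_le_one_iff {l m : ℕ} (L : Matrix (Fin l) (Fin m) ℂ) :
    colNorm L ≤ 1 ↔ ∀ j, ‖L.col j‖₂ ≤ 1 := by
  have hcol : colNorm L = ⨆ j, ‖L.col j‖₂ := by simp only [EuclideanSpace.norm_eq]; rfl
  rw [hcol]
  exact ⟨fun h j ↦ (le_ciSup (Set.finite_range _).bddAbove j).trans h,
    fun h ↦ Real.iSup_le h zero_le_one⟩

end SchurPolar

/-- Duality: the unit ball for the completely bounded bilinear-form norm is the polar of
the unit ball for the Schur multiplier norm with respect to `⟨X,Y⟩ = Tr(Yᴴ X)`. -/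
theorem cb_bilinear_ball_eq_polar_of_schur_ball
    (m n : ℕ) (X : Matrix (Fin m) (Fin n) ℂ) :
    (∀ (l : ℕ) (L : Matrix (Fin l) (Fin m) ℂ) (R : Matrix (Fin l) (Fin n) ℂ),
        colNorm L ≤ 1 → colNorm R ≤ 1 → ‖((Lᴴ * R)ᴴ * X).trace‖ ≤ 1) ↔
      (∃ (η : Fin m → ℂ) (ξ : Fin n → ℂ) (C : Matrix (Fin m) (Fin n) ℂ),
        X = (Matrix.diagonal η)ᴴ * C * Matrix.diagonal ξ ∧
        eNorm η * opNorm C * eNorm ξ ≤ 1) := by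
  simpa only [colNorm_le_one_iff, eNorm_eq_norm_toLp, opNorm_eq_l2_opNorm, MemSchurPolar] using
    cb_bilinear_ball_eq_polar_of_schur_ball_general X
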